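/- arXiv:1810.11749 — 4 statements merged into one kernel-verified Lean document; each statement's English description precedes it below -/
import Mathlib

section
/- Let 𝓐 : ℝ^{N₁×N₂} → ℝ^m be a linear map and let k be a positive integer with k ≤ min{N₁, N₂}. Suppose β > 0 satisfies ‖𝓐(Z)‖₁ ≤ β·‖Z‖_F for all Z ∈ ℝ^{N₁×N₂} with rank(Z) ≤ k. Let w ∈ ℝ^m with |wᵢ| ≤ 1 for all i = 1, …, m, and let H be a best rank-k approximation of 𝓐*(w). Then ‖H‖_F ≤ β. -/
noncomputable def frobNorm {N₁ N₂ : ℕ} (Z : Matrix (Fin N₁) (Fin N₂) ℝ) : ℝ :=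
  Real.sqrt (∑ i, ∑ j, (Z i j) ^ 2)

def frobInner {N₁ N₂ : ℕ} (A B : Matrix (Fin N₁) (Fin N₂) ℝ) : ℝ :=
  ∑ i, ∑ j, A i j * B i j

def l1norm {m : ℕ} (v : Fin m → ℝ) : ℝ := ∑ i, |v i|

noncomputable def sgnVec {m : ℕ} (v : Fin m → ℝ) : Fin m → ℝ := fun i => Real.sign (v i)

def IsBestRankApprox {N₁ N₂ : ℕ} (k : ℕ) (Z H : Matrix (Fin N₁) (Fin N₂) ℝ) : Prop :=
  H.rank ≤ k ∧
    ∀ W : Matrix (Fin N₁) (Fin N₂) ℝ, W.rank ≤ k → frobNorm (Z - H) ≤ frobNorm (Z - W)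
/-- If ‖𝓐(Z)‖₁ ≤ β‖Z‖_F for all Z of rank ≤ k, |wᵢ| ≤ 1 for all i, and H is a best rank-k
approximation of 𝓐*(w), then ‖H‖_F ≤ β. -/
theorem stmt8 {N₁ N₂ m : ℕ} (k : ℕ) (hk : 0 < k) (hkdim : k ≤ min N₁ N₂)
    (A : Matrix (Fin N₁) (Fin N₂) ℝ →ₗ[ℝ] (Fin m → ℝ))
    (Astar : (Fin m → ℝ) →ₗ[ℝ] Matrix (Fin N₁) (Fin N₂) ℝ)
    (hadj : ∀ (u : Fin m → ℝ) (Z : Matrix (Fin N₁) (Fin N₂) ℝ),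
      frobInner (Astar u) Z = ∑ i, u i * A Z i)
    (β : ℝ) (hβ : 0 < β)
    (hup : ∀ Z : Matrix (Fin N₁) (Fin N₂) ℝ, Z.rank ≤ k → l1norm (A Z) ≤ β * frobNorm Z)
    (w : Fin m → ℝ) (hw : ∀ i, |w i| ≤ 1)
    (H : Matrix (Fin N₁) (Fin N₂) ℝ) (hH : IsBestRankApprox k (Astar w) H) :
    frobNorm H ≤ β := by
  obtain ⟨hrk, hbest⟩ := hH
  set Z := Astar w with hZ
  set hh : ℝ := ∑ i, ∑ j, (H i j) ^ 2 with hhh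
  set zh : ℝ := frobInner Z H with hzh
  have hh0 : 0 ≤ hh := Finset.sum_nonneg fun i _ => Finset.sum_nonneg fun j _ => sq_nonneg _
  have hexp : ∀ t : ℝ, ∑ i, ∑ j, ((Z - t • H) i j) ^ 2
      = (∑ i, ∑ j, (Z i j) ^ 2) - 2 * t * zh + t ^ 2 * hh := by
    intro t
    simp only [hzh, hhh, frobInner, Finset.mul_sum, ← Finset.sum_sub_distrib,
      ← Finset.sum_add_distrib, Matrix.sub_apply, Matrix.smul_apply, smul_eq_mul]
    refine Finset.sum_congr rfl fun i _ => Finset.sum_congr rfl fun j _ => ?_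
    ring
  have hmin : ∀ t : ℝ, -2 * zh + hh ≤ - 2 * t * zh + t ^ 2 * hh := by
    intro t
    have hr : (t • H).rank ≤ k := by
      have : t • H = H * (t • (1 : Matrix (Fin N₂) (Fin N₂) ℝ)) := by simp
      rw [this]
      exact (Matrix.rank_mul_le_left _ _).trans hrk
    have h1 := hbest _ hr
    unfold frobNorm at h1
    have hnn : 0 ≤ ∑ i, ∑ j, ((Z - t • H) i j) ^ 2 :=
      Finset.sum_nonneg fun i _ => Finset.sum_nonneg fun j _ => sq_nonneg _
    rw [Real.sqrt_le_sqrt_iff hnn] at h1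
    have h2 := hexp 1
    rw [one_smul] at h2
    rw [h2, hexp t] at h1
    linarith
  have hN : frobNorm H = Real.sqrt hh := rfl
  rcases hh0.eq_or_lt with h0 | hpos
  · rw [hN, ← h0, Real.sqrt_zero]
    exact hβ.le
  have heq : zh = hh := by
    have h1 := hmin (zh / hh)
    have h2 : zh = (zh / hh) * hh := by field_simp
    generalize zh / hh = t at h1 h2
    rw [h2] at h1
    have h3 : (t - 1) ^ 2 * hh ≤ 0 := by nlinarith
    have h4 : (t - 1) ^ 2 = 0 := by
      have := sq_nonneg (t - 1)
      by_contra hne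
      have : 0 < (t - 1) ^ 2 := lt_of_le_of_ne this (Ne.symm hne)
      have := mul_pos this hpos
      linarith
    have h5 : t = 1 := by
      have := pow_eq_zero_iff (two_ne_zero) |>.1 h4
      linarith
    rw [h2, h5, one_mul]
  have hle : zh ≤ l1norm (A H) := by
    rw [hzh, hZ, hadj]
    refine Finset.sum_le_sum fun i _ => ?_
    calc w i * A H i ≤ |w i * A H i| := le_abs_self _
      _ = |w i| * |A H i| := abs_mul _ _
      _ ≤ 1 * |A H i| := mul_le_mul_of_nonneg_right (hw i) (abs_nonneg _)
      _ = |A H i| := one_mul _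
  have h6 := hle.trans (hup H hrk)
  rw [hN] at h6 ⊢
  have hs : 0 < Real.sqrt hh := Real.sqrt_pos.2 hpos
  have hss := Real.mul_self_sqrt hh0
  refine le_of_mul_le_mul_right ?_ hs
  rw [hss, ← heq]
  exact heq ▸ h6
end

section
/- Let 𝓐 : ℝ^{N₁×N₂} → ℝ^m be a linear map and let k be a positive integer with k ≤ min{N₁, N₂}. Suppose α > 0 satisfies α·‖Z‖_F ≤ ‖𝓐(Z)‖₁ for all Z ∈ ℝ^{N₁×N₂} with rank(Z) ≤ k. Let Z ∈ ℝ^{N₁×N₂} be a nonzero matrix with rank(Z) ≤ k, and let H be a best rank-k approximation of 𝓐*(sgn(𝓐(Z))). Then ‖H‖_F ≥ α. -/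
theorem rank_smul_le_aux {N₁ N₂ : ℕ} (t : ℝ) (W : Matrix (Fin N₁) (Fin N₂) ℝ) :
    (t • W).rank ≤ W.rank := by
  have h : t • W = (t • (1 : Matrix (Fin N₁) (Fin N₁) ℝ)) * W := by simp
  rw [h]
  exact Matrix.rank_mul_le_right _ _

theorem frobNorm_sq_aux {N₁ N₂ : ℕ} (W : Matrix (Fin N₁) (Fin N₂) ℝ) :
    frobNorm W ^ 2 = ∑ i, ∑ j, (W i j) ^ 2 := by
  unfold frobNorm
  exact Real.sq_sqrt (Finset.sum_nonneg fun i _ => Finset.sum_nonneg fun j _ => sq_nonneg _)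

theorem frobNorm_sub_smul_aux {N₁ N₂ : ℕ} (t : ℝ) (B W : Matrix (Fin N₁) (Fin N₂) ℝ) :
    frobNorm (B - t • W) ^ 2
      = frobNorm B ^ 2 - 2 * t * frobInner B W + t ^ 2 * frobNorm W ^ 2 := by
  simp only [frobNorm_sq_aux, frobInner, Finset.mul_sum, ← Finset.sum_sub_distrib,
    ← Finset.sum_add_distrib]
  refine Finset.sum_congr rfl fun i _ => Finset.sum_congr rfl fun j _ => ?_
  simp only [Matrix.sub_apply, Matrix.smul_apply, smul_eq_mul]
  ring

/-- If α‖Z‖_F ≤ ‖𝓐(Z)‖₁ for all Z of rank ≤ k, Z is a nonzero matrix of rank ≤ k, and H is a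
best rank-k approximation of 𝓐*(sgn(𝓐(Z))), then ‖H‖_F ≥ α. -/
theorem stmt9 {N₁ N₂ m : ℕ} (k : ℕ) (hk : 0 < k) (hkdim : k ≤ min N₁ N₂)
    (A : Matrix (Fin N₁) (Fin N₂) ℝ →ₗ[ℝ] (Fin m → ℝ))
    (Astar : (Fin m → ℝ) →ₗ[ℝ] Matrix (Fin N₁) (Fin N₂) ℝ)
    (hadj : ∀ (u : Fin m → ℝ) (Z : Matrix (Fin N₁) (Fin N₂) ℝ),
      frobInner (Astar u) Z = ∑ i, u i * A Z i)
    (α : ℝ) (hα : 0 < α)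
    (hlow : ∀ Z : Matrix (Fin N₁) (Fin N₂) ℝ, Z.rank ≤ k → α * frobNorm Z ≤ l1norm (A Z))
    (Z : Matrix (Fin N₁) (Fin N₂) ℝ) (hZ0 : Z ≠ 0) (hZ : Z.rank ≤ k)
    (H : Matrix (Fin N₁) (Fin N₂) ℝ) (hH : IsBestRankApprox k (Astar (sgnVec (A Z))) H) :
    α ≤ frobNorm H := by
  obtain ⟨hHr, hbest⟩ := hH
  have hc : frobInner (Astar (sgnVec (A Z))) Z = l1norm (A Z) := by
    rw [hadj]
    unfold l1norm sgnVec
    refine Finset.sum_congr rfl fun i _ => ?_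
    rcases lt_trichotomy (A Z i) 0 with h | h | h
    · rw [Real.sign_of_neg h, abs_of_neg h]; ring
    · simp [h]
    · rw [Real.sign_of_pos h, abs_of_pos h]; ring
  have hlowZ := hlow Z hZ
  rw [← hc] at hlowZ
  generalize Astar (sgnVec (A Z)) = B at *
  have key : ∀ (t : ℝ) (W : Matrix (Fin N₁) (Fin N₂) ℝ), W.rank ≤ k →
      - 2 * frobInner B H + frobNorm H ^ 2
        ≤ - 2 * t * frobInner B W + t ^ 2 * frobNorm W ^ 2 := by
    intro t W hW
    have h1 := hbest (t • W) ((rank_smul_le_aux t W).trans hW)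
    have h0 : 0 ≤ frobNorm (B - H) := Real.sqrt_nonneg _
    have h2 := pow_le_pow_left₀ h0 h1 2
    have h3 := frobNorm_sub_smul_aux 1 B H
    rw [one_smul] at h3
    rw [frobNorm_sub_smul_aux, h3] at h2
    linarith
  have hHn : 0 ≤ frobNorm H := Real.sqrt_nonneg _
  have hZn : 0 ≤ frobNorm Z := Real.sqrt_nonneg _
  have hZpos : 0 < frobNorm Z := by
    refine lt_of_le_of_ne hZn fun h0 => hZ0 ?_
    have h1 := frobNorm_sq_aux Z
    rw [← h0] at h1
    ext i j
    have h2 : (Z i j) ^ 2 ≤ ∑ i, ∑ j, (Z i j) ^ 2 :=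
      (Finset.single_le_sum (f := fun j => (Z i j) ^ 2) (fun j _ => sq_nonneg _)
        (Finset.mem_univ j)).trans
      (Finset.single_le_sum (f := fun i => ∑ j, (Z i j) ^ 2)
        (fun i _ => Finset.sum_nonneg fun j _ => sq_nonneg _) (Finset.mem_univ i))
    have h3 : (Z i j) ^ 2 = 0 := le_antisymm (by linarith) (sq_nonneg _)
    simpa using h3
  have hb : frobInner B H ≤ frobNorm H ^ 2 := by
    rcases hHn.eq_or_lt with h | h
    · have h1 := key 2 H hHr
      rw [← h] at h1 ⊢
      linarith
    · have h1 := key (frobInner B H / frobNorm H ^ 2) H hHr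
      have h2 : -2 * (frobInner B H / frobNorm H ^ 2) * frobInner B H
          + (frobInner B H / frobNorm H ^ 2) ^ 2 * frobNorm H ^ 2
          = - (frobInner B H ^ 2 / frobNorm H ^ 2) := by
        field_simp
        ring
      have h3 : frobInner B H ^ 2 / frobNorm H ^ 2 * frobNorm H ^ 2 = frobInner B H ^ 2 := by
        field_simp
      rw [h2] at h1
      have hp : 0 < frobNorm H ^ 2 := by positivity
      have h4 : (frobInner B H - frobNorm H ^ 2) ^ 2 ≤ 0 := by nlinarith
      nlinarith [pow_eq_zero_iff (two_ne_zero) |>.mp (le_antisymm h4 (sq_nonneg _))]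
  have h1 := key (α / frobNorm Z) Z hZ
  have h2 : (α / frobNorm Z) ^ 2 * frobNorm Z ^ 2 = α ^ 2 := by field_simp
  have h3 : α ^ 2 ≤ α / frobNorm Z * frobInner B Z := by
    calc α ^ 2 = α / frobNorm Z * (α * frobNorm Z) := by field_simp
      _ ≤ _ := mul_le_mul_of_nonneg_left hlowZ (by positivity)
  refine (sq_le_sq₀ hα.le hHn).mp ?_
  linarith
end

section
/- Let K and t be positive integers with t ≤ K ≤ min{N₁, N₂}, let 𝓐 : ℝ^{N₁×N₂} → ℝ^m satisfy the modified rank-restricted isometry property of order K with constants 0 < α ≤ β, and let γ := β/α ≥ 1. Let w ∈ ℝ^m with |wᵢ| ≤ 1 for all i, and let W be a nonzero best rank-t approximation of 𝓐*(w). Then β²/(4γ⁴) ≤ max{‖W‖_F², (1/(4γ²))·‖𝓐(W)‖₁²/‖W‖_F²} ≤ β². -/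
theorem frobNorm_sq' {N₁ N₂ : ℕ} (Z : Matrix (Fin N₁) (Fin N₂) ℝ) :
    frobNorm Z ^ 2 = ∑ i, ∑ j, (Z i j) ^ 2 := by
  unfold frobNorm
  exact Real.sq_sqrt (Finset.sum_nonneg fun i _ => Finset.sum_nonneg fun j _ => sq_nonneg _)

theorem frobNorm_sub_smul_sq {N₁ N₂ : ℕ} (Z W : Matrix (Fin N₁) (Fin N₂) ℝ) (c : ℝ) :
    frobNorm (Z - c • W) ^ 2
      = frobNorm Z ^ 2 - 2 * c * frobInner Z W + c ^ 2 * frobNorm W ^ 2 := by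
  simp only [frobNorm_sq', frobInner, Finset.mul_sum, ← Finset.sum_sub_distrib,
    ← Finset.sum_add_distrib]
  refine Finset.sum_congr rfl fun i _ => Finset.sum_congr rfl fun j _ => ?_
  simp only [Matrix.sub_apply, Matrix.smul_apply, smul_eq_mul]
  ring

theorem frobNorm_pos' {N₁ N₂ : ℕ} (W : Matrix (Fin N₁) (Fin N₂) ℝ) (h : W ≠ 0) :
    0 < frobNorm W := by
  have h0 : 0 ≤ frobNorm W := Real.sqrt_nonneg _
  refine lt_of_le_of_ne h0 fun he => h ?_
  have h1 := frobNorm_sq' W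
  rw [← he] at h1
  have h2 : ∑ i, ∑ j, (W i j) ^ 2 = 0 := by rw [← h1]; norm_num
  ext i j
  have h3 := (Finset.sum_eq_zero_iff_of_nonneg
    (fun i _ => Finset.sum_nonneg fun j _ => sq_nonneg (W i j))).1 h2 i (Finset.mem_univ i)
  have h4 := (Finset.sum_eq_zero_iff_of_nonneg
    (fun j _ => sq_nonneg (W i j))).1 h3 j (Finset.mem_univ j)
  exact pow_eq_zero_iff (two_ne_zero) |>.1 h4

theorem best_inner {N₁ N₂ t : ℕ} (Z W : Matrix (Fin N₁) (Fin N₂) ℝ) (h : W ≠ 0)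
    (hb : IsBestRankApprox t Z W) : frobInner Z W = frobNorm W ^ 2 := by
  have hn : 0 < frobNorm W ^ 2 := pow_pos (frobNorm_pos' W h) 2
  set n := frobNorm W ^ 2 with hn'
  set s := frobInner Z W with hs
  have hr : ((s / n) • W).rank ≤ t := by
    have h1 : (s / n) • W = ((s / n) • (1 : Matrix (Fin N₁) (Fin N₁) ℝ)) * W := by simp
    rw [h1]
    exact (Matrix.rank_mul_le_right _ _).trans hb.1
  have h2 := pow_le_pow_left₀ (Real.sqrt_nonneg _) (hb.2 _ hr) 2
  have h3 := frobNorm_sub_smul_sq Z W 1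
  rw [one_smul] at h3
  change frobNorm (Z - W) ^ 2 ≤ _ at h2
  rw [h3, frobNorm_sub_smul_sq, ← hn', ← hs] at h2
  have h5 : s / n * n = s := by field_simp
  set c := s / n with hc
  rw [← h5] at h2
  have h6 : n * (c - 1) ^ 2 ≤ 0 := by nlinarith
  have h7 : (c - 1) ^ 2 = 0 :=
    le_antisymm (nonpos_of_mul_nonpos_right h6 hn) (sq_nonneg _)
  have h8 : c = 1 := by linarith [pow_eq_zero_iff (two_ne_zero) |>.1 h7]
  rw [← h5, h8, one_mul]

/-- Under the modified rank-restricted isometry property of order K with constants 0 < α ≤ β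
and γ := β/α, if |wᵢ| ≤ 1 for all i and W is a nonzero best rank-t approximation of 𝓐*(w)
(with t ≤ K), then β²/(4γ⁴) ≤ max{‖W‖_F², (1/(4γ²))·‖𝓐(W)‖₁²/‖W‖_F²} ≤ β². -/
theorem stmt10 {N₁ N₂ m : ℕ} (K t : ℕ) (ht : 0 < t) (htK : t ≤ K) (hK : K ≤ min N₁ N₂)
    (A : Matrix (Fin N₁) (Fin N₂) ℝ →ₗ[ℝ] (Fin m → ℝ))
    (Astar : (Fin m → ℝ) →ₗ[ℝ] Matrix (Fin N₁) (Fin N₂) ℝ)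
    (hadj : ∀ (u : Fin m → ℝ) (Z : Matrix (Fin N₁) (Fin N₂) ℝ),
      frobInner (Astar u) Z = ∑ i, u i * A Z i)
    (α β : ℝ) (hα : 0 < α) (hαβ : α ≤ β)
    (hRIP : ∀ Z : Matrix (Fin N₁) (Fin N₂) ℝ, Z.rank ≤ K →
      α * frobNorm Z ≤ l1norm (A Z) ∧ l1norm (A Z) ≤ β * frobNorm Z)
    (γ : ℝ) (hγ : γ = β / α)
    (w : Fin m → ℝ) (hw : ∀ i, |w i| ≤ 1)
    (W : Matrix (Fin N₁) (Fin N₂) ℝ) (hW0 : W ≠ 0)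
    (hW : IsBestRankApprox t (Astar w) W) :
    β ^ 2 / (4 * γ ^ 4) ≤
        max (frobNorm W ^ 2) ((1 / (4 * γ ^ 2)) * l1norm (A W) ^ 2 / frobNorm W ^ 2) ∧
      max (frobNorm W ^ 2) ((1 / (4 * γ ^ 2)) * l1norm (A W) ^ 2 / frobNorm W ^ 2) ≤ β ^ 2 := by
  have hn := frobNorm_pos' W hW0
  have hR := hRIP W (hW.1.trans htK)
  have hβ : 0 < β := hα.trans_le hαβ
  have h1 := best_inner _ W hW0 hW
  rw [hadj] at h1
  have h2 : ∑ i, w i * A W i ≤ l1norm (A W) := by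
    refine Finset.sum_le_sum fun i _ => ?_
    calc w i * A W i ≤ |w i * A W i| := le_abs_self _
      _ = |w i| * |A W i| := abs_mul _ _
      _ ≤ 1 * |A W i| := mul_le_mul_of_nonneg_right (hw i) (abs_nonneg _)
      _ = |A W i| := one_mul _
  obtain ⟨hlo, hhi⟩ := hR
  generalize l1norm (A W) = L at *
  generalize frobNorm W = n at *
  have hγ1 : 1 ≤ γ := by rw [hγ]; exact (one_le_div hα).2 hαβ
  have hβα : β = γ * α := by rw [hγ]; field_simp
  have hγ0 : 0 < γ := by linarith
  have hL0 : 0 ≤ L := le_trans (by positivity) hlo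
  constructor
  · refine le_trans ?_ (le_max_right _ _)
    have e1 : β ^ 2 / (4 * γ ^ 4) = (1 / (4 * γ ^ 2)) * (α * n) ^ 2 / n ^ 2 := by
      rw [hβα]; field_simp
    rw [e1]
    gcongr
  · refine max_le ?_ ?_
    · have : n ≤ β := by nlinarith
      gcongr
    · have e1 : (1 / (4 * γ ^ 2)) * L ^ 2 / n ^ 2 ≤ (1 / (4 * γ ^ 2)) * (β * n) ^ 2 / n ^ 2 := by
        gcongr
      have e2 : (1 / (4 * γ ^ 2)) * (β * n) ^ 2 / n ^ 2 = (1 / (4 * γ ^ 2)) * β ^ 2 := by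
        field_simp
      have e3 : 1 / (4 * γ ^ 2) ≤ 1 := by
        rw [div_le_one (by positivity)]; nlinarith
      rw [e2] at e1
      nlinarith [sq_nonneg β]
end

section
/- Let c be a real number with 0 < |c| < 1. Then the 2×2 matrix [[3, 0], [0, 0]] is the unique best rank-1 approximation (in Frobenius norm) of the matrix Z = [[3, 0], [0, 3c]], but [[3, 0], [0, 0]] is NOT a best rank-1 approximation of the matrix [[3, c], [c, c]]. (The matrix [[3, c], [c, c]] is the orthogonal projection, with respect to the Frobenius inner product, of Z onto the subspace of ℝ^{2×2} spanned by [[1, 0], [0, 0]] and [[1, 1], [1, 1]], a subspace that contains the rank-one matrix [[1, 0], [0, 0]] arising from the top singular vectors of Z.) -/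
theorem aux_det (W : Matrix (Fin 2) (Fin 2) ℝ) (h : W.rank ≤ 1) :
    W 0 0 * W 1 1 = W 0 1 * W 1 0 := by
  by_contra hne
  have hd : IsUnit W.det := by
    rw [isUnit_iff_ne_zero, Matrix.det_fin_two]
    exact sub_ne_zero.mpr hne
  have hr := Matrix.rank_of_isUnit W ((Matrix.isUnit_iff_isUnit_det W).mpr hd)
  simp at hr
  omega

theorem aux_key (c p q r s : ℝ) (hc1 : |c| < 1) (h : p * s = q * r) :
    0 ≤ (|p| + |s| - 3) ^ 2 ∧ 0 ≤ 6 * |s| * (1 - |c|) ∧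
    9 * c ^ 2 + (|p| + |s| - 3) ^ 2 + 6 * |s| * (1 - |c|) + 6 * (|p| - p)
      + (|q| - |r|) ^ 2 ≤ (3 - p) ^ 2 + q ^ 2 + r ^ 2 + (3 * c - s) ^ 2 := by
  have h1 : |p| * |s| = |q| * |r| := by rw [← abs_mul, ← abs_mul, h]
  have h2 : c * s ≤ |c| * |s| := by rw [← abs_mul]; exact le_abs_self _
  refine ⟨sq_nonneg _, mul_nonneg (by positivity) (by linarith), ?_⟩
  nlinarith [sq_abs p, sq_abs q, sq_abs r, sq_abs s]

theorem aux_eq (c p q r s : ℝ) (hc1 : |c| < 1) (h : p * s = q * r)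
    (hle : (3 - p) ^ 2 + q ^ 2 + r ^ 2 + (3 * c - s) ^ 2 ≤ 9 * c ^ 2) :
    p = 3 ∧ q = 0 ∧ r = 0 ∧ s = 0 := by
  obtain ⟨k1, k2, k3⟩ := aux_key c p q r s hc1 h
  have k4 := le_abs_self p
  have k5 := sq_nonneg (|q| - |r|)
  have e1 : |s| * (1 - |c|) = 0 := by linarith
  have hs : s = 0 := by
    rcases mul_eq_zero.mp e1 with e | e
    · exact abs_eq_zero.mp e
    · linarith
  subst hs
  have a1 := sq_nonneg (3 - p)
  have a2 := sq_nonneg q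
  have a3 := sq_nonneg r
  have b1 : (3 - p) ^ 2 = 0 := by nlinarith
  have b2 : q ^ 2 = 0 := by nlinarith
  have b3 : r ^ 2 = 0 := by nlinarith
  rw [sq_eq_zero_iff] at b1 b2 b3
  exact ⟨by linarith, b2, b3, rfl⟩

theorem aux_rank (a b x y : ℝ) : (!![a * x, a * y; b * x, b * y] : Matrix (Fin 2) (Fin 2) ℝ).rank ≤ 1 := by
  have : (!![a * x, a * y; b * x, b * y] : Matrix (Fin 2) (Fin 2) ℝ)
      = Matrix.vecMulVec ![a, b] ![x, y] := by
    ext i j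
    fin_cases i <;> fin_cases j <;> simp [Matrix.vecMulVec_apply]
  rw [this]
  exact Matrix.rank_vecMulVec_le _ _

theorem aux_norm (Z H W : Matrix (Fin 2) (Fin 2) ℝ) : frobNorm (Z - H) ≤ frobNorm (Z - W) ↔
    (Z 0 0 - H 0 0) ^ 2 + (Z 0 1 - H 0 1) ^ 2 + (Z 1 0 - H 1 0) ^ 2 + (Z 1 1 - H 1 1) ^ 2 ≤
    (Z 0 0 - W 0 0) ^ 2 + (Z 0 1 - W 0 1) ^ 2 + (Z 1 0 - W 1 0) ^ 2 + (Z 1 1 - W 1 1) ^ 2 := by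
  unfold frobNorm
  rw [Real.sqrt_le_sqrt_iff (by positivity)]
  simp only [Fin.sum_univ_two, Matrix.sub_apply, add_assoc]

/-- For 0 < |c| < 1: the matrix [[3,0],[0,0]] is the unique best rank-1 approximation of
Z = [[3,0],[0,3c]], but [[3,0],[0,0]] is not a best rank-1 approximation of [[3,c],[c,c]]
(the projection of Z onto span{[[1,0],[0,0]], [[1,1],[1,1]]}). -/
theorem stmt13 (c : ℝ) (hc0 : c ≠ 0) (hc1 : |c| < 1) :
    (IsBestRankApprox 1 (!![(3 : ℝ), 0; 0, 3 * c]) (!![(3 : ℝ), 0; 0, 0]) ∧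
      ∀ H : Matrix (Fin 2) (Fin 2) ℝ,
        IsBestRankApprox 1 (!![(3 : ℝ), 0; 0, 3 * c]) H → H = !![(3 : ℝ), 0; 0, 0]) ∧
    ¬ IsBestRankApprox 1 (!![(3 : ℝ), c; c, c]) (!![(3 : ℝ), 0; 0, 0]) := by
  have hrk : (!![(3 : ℝ), 0; 0, 0] : Matrix (Fin 2) (Fin 2) ℝ).rank ≤ 1 := by
    have := aux_rank 3 0 1 0
    simpa using this
  refine ⟨⟨⟨hrk, ?_⟩, ?_⟩, ?_⟩
  · intro W hW
    rw [aux_norm]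
    obtain ⟨k1, k2, k3⟩ := aux_key c _ _ _ _ hc1 (aux_det W hW)
    have k4 := le_abs_self (W 0 0)
    have k5 := sq_nonneg (|W 0 1| - |W 1 0|)
    simp
    nlinarith
  · rintro H ⟨hH, hb⟩
    have h1 := hb _ hrk
    rw [aux_norm] at h1
    simp at h1
    obtain ⟨e1, e2, e3, e4⟩ := aux_eq c _ _ _ _ hc1 (aux_det H hH) (by nlinarith)
    ext i j
    fin_cases i <;> fin_cases j <;> simp [e1, e2, e3, e4]
  · rintro ⟨-, hb⟩
    have h1 := hb _ (aux_rank 3 c 1 (c / 3))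
    rw [aux_norm] at h1
    simp at h1
    have h2 := abs_lt.mp hc1
    have h3 : 0 < c ^ 2 := by positivity
    have h4 : (1 - c / 3) ^ 2 < 3 := by nlinarith
    have h5 := mul_lt_mul_of_pos_left h4 h3
    ring_nf at h1 h5
    linarith
end
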